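/- In the ring of formal power series ℝ[[t]], the product (∏_{r=1}^{n} (1 − x_r t)) · (Σ_{j≥0} c_{d+j} t^j) equals the polynomial R(t) = Σ_{i=1}^{n−d} α_i ∏_{r ∈ {1,…,n} \setminus {i, i+1, …, i+d}} (1 − x_r t), which has degree at most n−d−1. -/

import Mathlib

open Finset Polynomial PowerSeries

/-- The complete homogeneous symmetric polynomial of degree `j` evaluated at
`v : Fin m → ℝ` (sum of all monomials of total degree `j`, with `hsymm 0 v = 1`). -/
noncomputable def hsymm {m : ℕ} (j : ℕ) (v : Fin m → ℝ) : ℝ :=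
  haveI := Classical.decPred (fun f : Fin j → Fin m => Monotone f)
  ∑ f ∈ Finset.univ.filter (fun f : Fin j → Fin m => Monotone f), ∏ i, v (f i)

/-- The normalized moment sequence: `c_j = 0` for `j < d` and
`c_{d+j} = Σ_{i=1}^{n-d} α_i h_j(x_i, …, x_{i+d})`. -/
noncomputable def cseq (d n : ℕ) (x : Fin n → ℝ) (α : Fin (n - d) → ℝ) (j : ℕ) : ℝ :=
  if d ≤ j then
    ∑ i : Fin (n - d), α i * hsymm (j - d)
      (fun k : Fin (d + 1) => x ⟨i.1 + k.1, by have h1 := i.2; have h2 := k.2; omega⟩)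
  else 0

/-- `Q(t) = ∏_{r=1}^{n} (1 - x_r t)`. -/
noncomputable def Qpoly (n : ℕ) (x : Fin n → ℝ) : Polynomial ℝ :=
  ∏ r : Fin n, (1 - Polynomial.C (x r) * Polynomial.X)

/-- `R(t) = Σ_{i=1}^{n-d} α_i ∏_{r ∉ {i,…,i+d}} (1 - x_r t)`. -/
noncomputable def Rpoly (d n : ℕ) (x : Fin n → ℝ) (α : Fin (n - d) → ℝ) : Polynomial ℝ :=
  ∑ i : Fin (n - d), Polynomial.C (α i) *
    ∏ r ∈ Finset.univ.filter (fun r : Fin n => r.1 < i.1 ∨ i.1 + d < r.1),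
      (1 - Polynomial.C (x r) * Polynomial.X)


lemma hsymm_eq {m : ℕ} (j : ℕ) (v : Fin m → ℝ)
    [DecidablePred (fun f : Fin j → Fin m => Monotone f)] :
    hsymm j v = ∑ f ∈ Finset.univ.filter (fun f : Fin j → Fin m => Monotone f), ∏ i, v (f i) := by
  unfold hsymm
  congr!

lemma hsymm_deg_zero {m : ℕ} (v : Fin m → ℝ) : hsymm 0 v = 1 := by
  classical
  rw [hsymm_eq]
  rw [Finset.filter_true_of_mem]
  · simp
  · intro f _ a
    exact a.elim0

lemma hsymm_no_vars (j : ℕ) (v : Fin 0 → ℝ) : hsymm (j + 1) v = 0 := by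
  classical
  rw [hsymm_eq]
  apply Finset.sum_eq_zero
  intro f _
  exact (f 0).elim0

lemma hsymm_rec {m : ℕ} (j : ℕ) (v : Fin (m + 1) → ℝ) :
    hsymm (j + 1) v = v 0 * hsymm j v + hsymm (j + 1) (fun k : Fin m => v k.succ) := by
  classical
  rw [hsymm_eq, hsymm_eq, hsymm_eq,
    ← Finset.sum_filter_add_sum_filter_not _ (fun f : Fin (j + 1) → Fin (m + 1) => f 0 = 0)]
  congr 1
  · rw [Finset.mul_sum]
    symm
    refine Finset.sum_bij (fun g _ => (Fin.cons 0 g : Fin (j + 1) → Fin (m + 1))) ?_ ?_ ?_ ?_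
    · intro g hg
      simp only [Finset.mem_filter, Finset.mem_univ, true_and] at hg ⊢
      refine ⟨?_, by simp⟩
      intro a b hab
      revert hab
      refine Fin.cases ?_ (fun a' => ?_) a
      · intro _; simp
      · refine Fin.cases ?_ (fun b' => ?_) b
        · intro h
          exact absurd h (by simp)
        · intro h
          simpa using hg (Fin.succ_le_succ_iff.mp h)
    · intro g _ g' _ h
      exact Fin.cons_right_injective (α := fun _ => Fin (m + 1)) 0 h
    · intro f hf
      simp only [Finset.mem_filter, Finset.mem_univ, true_and] at hf
      refine ⟨Fin.tail f, ?_, ?_⟩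
      · simp only [Finset.mem_filter, Finset.mem_univ, true_and]
        intro a b hab
        exact hf.1 (Fin.succ_le_succ_iff.mpr hab)
      · rw [← hf.2]; exact Fin.cons_self_tail f
    · intro g _
      rw [Fin.prod_univ_succ]
      simp
  · symm
    refine Finset.sum_bij (fun g _ => fun i => (g i).succ) ?_ ?_ ?_ ?_
    · intro g hg
      simp only [Finset.mem_filter, Finset.mem_univ, true_and] at hg ⊢
      refine ⟨fun a b hab => Fin.succ_le_succ_iff.mpr (hg hab), Fin.succ_ne_zero _⟩
    · intro g _ g' _ h
      funext i
      exact Fin.succ_injective _ (congrFun h i)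
    · intro f hf
      simp only [Finset.mem_filter, Finset.mem_univ, true_and] at hf
      have hne : ∀ i, f i ≠ 0 := by
        intro i hi
        have := hf.1 (Fin.zero_le i)
        rw [hi] at this
        exact hf.2 (Fin.le_zero_iff.mp this)
      refine ⟨fun i => (f i).pred (hne i), ?_, ?_⟩
      · simp only [Finset.mem_filter, Finset.mem_univ, true_and]
        intro a b hab
        exact Fin.pred_le_pred_iff.mpr (hf.1 hab)
      · funext i; simp
    · intro g _
      rfl

lemma hsymm_gen {m : ℕ} (v : Fin m → ℝ) :
    (∏ k : Fin m, (1 - PowerSeries.C (v k) * PowerSeries.X)) *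
      (PowerSeries.mk fun j => hsymm j v) = 1 := by
  induction m with
  | zero =>
    ext j
    cases j with
    | zero => simp [hsymm_deg_zero]
    | succ j => simp [hsymm_no_vars, PowerSeries.coeff_one]
  | succ m ih =>
    have key : (1 - PowerSeries.C (v 0) * PowerSeries.X) * (PowerSeries.mk fun j => hsymm j v)
        = PowerSeries.mk fun j => hsymm j (fun k : Fin m => v k.succ) := by
      ext j
      cases j with
      | zero => simp [sub_mul, mul_assoc, hsymm_deg_zero]
      | succ j =>
        simp [sub_mul, mul_assoc, hsymm_rec, PowerSeries.coeff_succ_X_mul]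
    rw [Fin.prod_univ_succ, mul_comm (1 - _), mul_assoc, key]
    exact ih _

lemma prod_split (d n : ℕ) (i : Fin (n - d)) (g : Fin n → PowerSeries ℝ) :
    ∏ r, g r = (∏ r ∈ Finset.univ.filter (fun r : Fin n => r.1 < i.1 ∨ i.1 + d < r.1), g r) *
      ∏ k : Fin (d + 1), g ⟨i.1 + k.1, by have h1 := i.2; have h2 := k.2; omega⟩ := by
  classical
  rw [← Finset.prod_filter_mul_prod_filter_not _ (fun r : Fin n => r.1 < i.1 ∨ i.1 + d < r.1)]
  congr 1
  symm
  refine Finset.prod_bij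
    (fun k _ => ⟨i.1 + k.1, by have h1 := i.2; have h2 := k.2; omega⟩) ?_ ?_ ?_ ?_
  · intro k _
    have := k.2
    simp only [Finset.mem_filter, Finset.mem_univ, true_and]
    omega
  · intro k _ k' _ h
    simp only [Fin.mk.injEq] at h
    ext; omega
  · intro r hr
    simp only [Finset.mem_filter, Finset.mem_univ, true_and] at hr
    refine ⟨⟨r.1 - i.1, by omega⟩, Finset.mem_univ _, ?_⟩
    ext
    simp only
    omega
  · intro k _
    rfl

lemma coe_prod_lin {ι : Type*} (s : Finset ι) (y : ι → ℝ) :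
    ((∏ r ∈ s, (1 - Polynomial.C (y r) * Polynomial.X) : Polynomial ℝ) : PowerSeries ℝ)
      = ∏ r ∈ s, (1 - PowerSeries.C (y r) * PowerSeries.X) := by
  rw [← Polynomial.coeToPowerSeries.ringHom_apply, map_prod]
  simp

lemma card_outside (d n : ℕ) (i : Fin (n - d)) :
    (Finset.univ.filter (fun r : Fin n => r.1 < i.1 ∨ i.1 + d < r.1)).card ≤ n - d - 1 := by
  classical
  have h := Finset.card_filter_add_card_filter_not (s := (Finset.univ : Finset (Fin n)))
    (fun r : Fin n => r.1 < i.1 ∨ i.1 + d < r.1)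
  have h2 : d + 1 ≤
      (Finset.univ.filter (fun r : Fin n => ¬ (r.1 < i.1 ∨ i.1 + d < r.1))).card := by
    have := Finset.card_le_card_of_injOn (s := (Finset.univ : Finset (Fin (d + 1))))
      (t := Finset.univ.filter (fun r : Fin n => ¬ (r.1 < i.1 ∨ i.1 + d < r.1)))
      (fun k => ⟨i.1 + k.1, by have h1 := i.2; have h2 := k.2; omega⟩)
      (by
        intro k _
        have := k.2
        simp
        omega)
      (by
        intro k _ k' _ h
        simp only [Fin.mk.injEq] at h
        ext; omega)
    simpa using this
  rw [Finset.card_univ, Fintype.card_fin] at h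
  omega

/-- **Rational generating function of the normalized moments.** In `ℝ[[t]]`,
`(∏_{r=1}^{n}(1 - x_r t)) · (Σ_{j≥0} c_{d+j} t^j) = R(t)`, a polynomial of
degree at most `n - d - 1`. -/
theorem cseq_rational_generating_function (d n : ℕ) (hn : d + 1 ≤ n)
    (x : Fin n → ℝ) (hx : StrictMono x) (α : Fin (n - d) → ℝ) :
    (Qpoly n x : PowerSeries ℝ) * (PowerSeries.mk fun j => cseq d n x α (d + j))
        = (Rpoly d n x α : PowerSeries ℝ)
    ∧ (Rpoly d n x α).natDegree ≤ n - d - 1 := by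
  constructor
  · have hmk : (PowerSeries.mk fun j => cseq d n x α (d + j)) =
        ∑ i : Fin (n - d), PowerSeries.C (α i) * PowerSeries.mk fun j => hsymm j
          (fun k : Fin (d + 1) =>
            x ⟨i.1 + k.1, by have h1 := i.2; have h2 := k.2; omega⟩) := by
      ext j
      simp [cseq]
    have hR : (Rpoly d n x α : PowerSeries ℝ) = ∑ i : Fin (n - d), PowerSeries.C (α i) *
        ∏ r ∈ Finset.univ.filter (fun r : Fin n => r.1 < i.1 ∨ i.1 + d < r.1),
          (1 - PowerSeries.C (x r) * PowerSeries.X) := by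
      unfold Rpoly
      rw [← Polynomial.coeToPowerSeries.ringHom_apply, map_sum]
      refine Finset.sum_congr rfl fun i _ => ?_
      rw [map_mul, Polynomial.coeToPowerSeries.ringHom_apply,
        Polynomial.coeToPowerSeries.ringHom_apply, coe_prod_lin, Polynomial.coe_C]
    rw [hmk, hR, Qpoly, coe_prod_lin, Finset.mul_sum]
    refine Finset.sum_congr rfl fun i _ => ?_
    rw [prod_split d n i, mul_left_comm, mul_assoc, hsymm_gen, mul_one]
  · unfold Rpoly
    refine Polynomial.natDegree_sum_le_of_forall_le _ _ fun i _ => ?_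
    refine (Polynomial.natDegree_C_mul_le _ _).trans ?_
    refine (Polynomial.natDegree_prod_le _ _).trans ?_
    refine le_trans ?_ (card_outside d n i)
    rw [Finset.card_eq_sum_ones]
    refine Finset.sum_le_sum fun r _ => ?_
    refine (Polynomial.natDegree_sub_le _ _).trans ?_
    rw [Polynomial.natDegree_one]
    exact max_le (by omega) ((Polynomial.natDegree_C_mul_le _ _).trans Polynomial.natDegree_X_le)
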